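/- The limit distribution function F of the Calkin–Wilf tree satisfies the reflection symmetry F(y) + F(1/y) = 1 for every real y > 0. -/

import Mathlib

open Filter

/-- The generations of the Calkin–Wilf tree: `CW 0 = [1/1]` is the first
generation, and each generation is obtained from the previous one by replacing
each entry `x` by `x/(x+1)` and `x+1`, in this order.  Thus the `n`-th
generation of the paper is `CW (n-1)`. -/
def CW : ℕ → List ℚ
  | 0 => [1]
  | n + 1 => (CW n).flatMap (fun x => [x / (x + 1), x + 1])

open scoped Classical in
/-- `Fcw n` is the distribution function of the `(n+1)`-st generation of the
Calkin–Wilf tree: `Fcw (n-1) x = F_n(x) = 2^(1-n) · #{j : x_j^(n) ≤ x}`. -/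
noncomputable def Fcw (n : ℕ) (x : ℝ) : ℝ :=
  ((CW n).countP (fun q => decide ((q : ℝ) ≤ x))) / 2 ^ n

theorem CW_pos (n : ℕ) : ∀ x ∈ CW n, 0 < x := by
  induction n with
  | zero => simp [CW]
  | succ n ih =>
    intro x hx
    simp only [CW, List.mem_flatMap] at hx
    obtain ⟨a, ha, hx⟩ := hx
    have := ih a ha
    simp only [List.mem_cons, List.not_mem_nil, or_false] at hx
    rcases hx with rfl | rfl <;> positivity

theorem CW_length (n : ℕ) : (CW n).length = 2 ^ n := by
  induction n with
  | zero => simp [CW]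
  | succ n ih => simp [CW, List.length_flatMap, ih, pow_succ]

theorem CW_nodup (n : ℕ) : (CW n).Nodup := by
  induction n with
  | zero => simp [CW]
  | succ n ih =>
    rw [CW, List.nodup_flatMap]
    have hlt : ∀ a : ℚ, 0 < a → a / (a + 1) < 1 := by
      intro a ha
      rw [div_lt_one (by positivity)]
      linarith
    refine ⟨?_, ?_⟩
    · intro x hx
      have h0 := CW_pos n x hx
      have := hlt x h0
      simp only [List.nodup_cons, List.mem_singleton, List.not_mem_nil, not_false_eq_true,
        List.nodup_nil, and_true]
      intro h
      linarith
    · refine List.Pairwise.imp_of_mem ?_ ih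
      intro a b ha hb hab
      have ha0 := CW_pos n a ha
      have hb0 := CW_pos n b hb
      have h1 := hlt a ha0
      have h2 := hlt b hb0
      have h3 : a / (a + 1) ≠ b / (b + 1) := by
        intro h
        rw [div_eq_div_iff (by positivity) (by positivity)] at h
        apply hab
        linarith
      intro z hz hz'
      simp only [List.mem_cons, List.not_mem_nil, or_false] at hz hz'
      rcases hz with rfl | rfl <;> rcases hz' with h | h
      · exact h3 h
      · linarith
      · linarith
      · exact hab (by linarith)

theorem CW_perm_inv (n : ℕ) : ((CW n).map (fun x => x⁻¹)).Perm (CW n) := by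
  induction n with
  | zero => simp [CW]
  | succ n ih =>
    refine List.Perm.trans ?_ (List.Perm.flatMap_right _ ih)
    rw [CW, List.map_flatMap, List.flatMap_map]
    refine List.Perm.flatMap_left _ ?_
    intro x hx
    have h0 := CW_pos n x hx
    have e1 : (x / (x + 1))⁻¹ = x⁻¹ + 1 := by field_simp; try ring
    have e2 : (x + 1)⁻¹ = x⁻¹ / (x⁻¹ + 1) := by field_simp; try ring
    simp only [List.map_cons, List.map_nil]
    rw [e1, e2]
    exact List.Perm.swap _ _ _

theorem countP_add_aux (y : ℝ) (l : List ℚ) :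
    l.countP (fun q : ℚ => decide ((q : ℝ) ≤ y)) + l.countP (fun q : ℚ => decide (y ≤ (q : ℝ)))
      = l.length + l.countP (fun q : ℚ => decide ((q : ℝ) = y)) := by
  induction l with
  | nil => simp
  | cons a l ih =>
    simp only [List.countP_cons, List.length_cons, decide_eq_true_eq]
    rcases lt_trichotomy (a : ℝ) y with h | h | h
    · simp only [h.le, h.ne, not_le.2 h, if_true, if_false]; omega
    · simp only [h, le_refl, if_true]; omega
    · simp only [h.le, h.ne', not_le.2 h, if_true, if_false]; omega

theorem countP_eq_le_one (y : ℝ) (l : List ℚ) (hl : l.Nodup) :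
    l.countP (fun q : ℚ => decide ((q : ℝ) = y)) ≤ 1 := by
  induction l with
  | nil => simp
  | cons a l ih =>
    rw [List.nodup_cons] at hl
    have := ih hl.2
    rw [List.countP_cons]
    by_cases h : (a : ℝ) = y
    · have : l.countP (fun q : ℚ => decide ((q : ℝ) = y)) = 0 := by
        rw [List.countP_eq_zero]
        intro b hb hby
        rw [decide_eq_true_eq, ← h] at hby
        exact hl.1 ((Rat.cast_injective hby) ▸ hb)
      simp [this, h]
    · simpa [h] using this

theorem Fcw_add (n : ℕ) (y : ℝ) (hy : 0 < y) :
    Fcw n y + Fcw n (1 / y)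
      = 1 + ((CW n).countP (fun q : ℚ => decide ((q : ℝ) = y)) : ℝ) / 2 ^ n := by
  have h1 : (CW n).countP (fun q : ℚ => decide ((q : ℝ) ≤ 1 / y))
      = (CW n).countP (fun q : ℚ => decide (y ≤ (q : ℝ))) := by
    rw [← (CW_perm_inv n).countP_eq, List.countP_map]
    apply List.countP_congr
    intro x hx
    have h0 : (0 : ℝ) < x := by exact_mod_cast CW_pos n x hx
    simp only [Function.comp, decide_eq_true_eq, Rat.cast_inv, one_div]
    exact inv_le_inv₀ h0 hy
  have h2 := countP_add_aux y (CW n)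
  rw [← h1, CW_length] at h2
  have h3 := congrArg (Nat.cast : ℕ → ℝ) h2
  push_cast at h3
  have e : ∀ x, Fcw n x = ((CW n).countP (fun q : ℚ => decide ((q : ℝ) ≤ x)) : ℝ) / 2 ^ n := by
    intro x
    have hb : ∀ l : List ℚ, (l >>= fun a => pure (a : ℝ)) = l.map (fun a : ℚ => (a : ℝ)) := by
      intro l
      induction l with
      | nil => rfl
      | cons a l ih => simpa using ih
    unfold Fcw
    rw [hb, List.countP_map]
    congr!
  rw [e, e, ← add_div, h3, add_div, div_self (by positivity)]

/-- The limit distribution function `F` of the Calkin–Wilf tree satisfies the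
reflection symmetry `F(y) + F(1/y) = 1` for every real `y > 0`. -/
theorem calkin_wilf_limit_distribution_reflection (F : ℝ → ℝ)
    (hF : ∀ x : ℝ, 0 ≤ x → Tendsto (fun n => Fcw n x) atTop (nhds (F x)))
    (y : ℝ) (hy : 0 < y) :
    F y + F (1 / y) = 1 := by
  have hsum := (hF y hy.le).add (hF (1 / y) (by positivity))
  refine tendsto_nhds_unique hsum ?_
  simp only [Fcw_add _ y hy]
  have h0 : Tendsto (fun n : ℕ => ((CW n).countP (fun q : ℚ => decide ((q : ℝ) = y)) : ℝ) / 2 ^ n)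
      atTop (nhds 0) := by
    refine squeeze_zero (g := fun n : ℕ => ((1 : ℝ) / 2) ^ n) (fun n => by positivity) ?_
      (tendsto_pow_atTop_nhds_zero_of_lt_one (by norm_num) (by norm_num))
    intro n
    rw [div_pow, one_pow]
    have : ((CW n).countP (fun q : ℚ => decide ((q : ℝ) = y)) : ℝ) ≤ 1 := by
      exact_mod_cast countP_eq_le_one y _ (CW_nodup n)
    gcongr
  simpa using h0.const_add 1
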